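/- arXiv:2208.00864 — 2 statements merged into one kernel-verified Lean document; each statement's English description precedes it below -/
import Mathlib

section
/- For the Ising model at zero field on a finite graph G = (V,E) and any subset A ⊆ V, the spin correlation admits the random current representation: ⟨σ_A⟩ = (Σ_{n : ∂n = A} w_β(n)) / (Σ_{n : ∂n = ∅} w_β(n)), where currents n : E → ℕ have weights w_β(n) = Π_{e∈E} β^{n_e}/(n_e!) and ∂n is the set of vertices with odd total incident current. -/
open Finset

/-- The spin value attached to a Boolean: `+1` or `-1`. -/
noncomputable def spin (b : Bool) : ℝ := if b then 1 else -1

/-- Interaction energy `Σ_{{x,y}∈E} σ_x σ_y` of a spin configuration. -/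
noncomputable def interaction {V : Type*} [Fintype V] [DecidableEq V]
    (G : SimpleGraph V) [DecidableRel G.Adj] (σ : V → Bool) : ℝ :=
  ∑ e ∈ G.edgeFinset,
    Sym2.lift ⟨fun x y => spin (σ x) * spin (σ y), fun _ _ => by ring⟩ e

/-- The weight `w_β(n) = Π_{e∈E} β^{n_e}/n_e!` of a current `n : E → ℕ`. -/
noncomputable def currentWeight {V : Type*} [Fintype V] [DecidableEq V]
    (G : SimpleGraph V) [DecidableRel G.Adj] (β : ℝ)
    (n : ↥G.edgeFinset → ℕ) : ℝ :=
  ∏ e : ↥G.edgeFinset, β ^ (n e) / (Nat.factorial (n e) : ℝ)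

/-- The source set `∂n` of a current: the vertices whose total incident current
`Δ_x(n) = Σ_{y : {x,y}∈E} n_{{x,y}}` is odd. -/
def sources {V : Type*} [Fintype V] [DecidableEq V]
    (G : SimpleGraph V) [DecidableRel G.Adj] (n : ↥G.edgeFinset → ℕ) : Finset V :=
  Finset.univ.filter fun x =>
    ¬ Even (∑ e : ↥G.edgeFinset, if x ∈ (e : Sym2 V) then n e else 0)

/-! Expand `exp (J σ_S)` in powers of the coupling `J` for every bond `S`: a current `n` records the
power taken on each bond, and the resulting spin monomial carries `σ_x` to the total current
incident to `x`. After multiplication by `σ_A`, summing over configurations leaves exactly the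
monomials in which all exponents are even, that is those with `∂n = A`, each with the factor
`2 ^ |V|`, which cancels in the quotient. -/

theorem hasSum_prod_pi {ι R : Type*} [hι : Fintype ι] [NormedCommRing R] [CompleteSpace R]
    {κ : ι → Type*} {f : ∀ i, κ i → R} {a : ι → R} (hf : ∀ i, HasSum (f i) (a i))
    (hf_norm : ∀ i, Summable fun k => ‖f i k‖) :
    HasSum (fun k : ∀ i, κ i => ∏ i, f i (k i)) (∏ i, a i) := by
  -- The induction has to carry absolute summability, which is what makes Cauchy products converge.
  suffices h : ∀ (κ : ι → Type _) (f : ∀ i, κ i → R) (a : ι → R), (∀ i, HasSum (f i) (a i)) →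
      (∀ i, Summable fun k => ‖f i k‖) →
        (Summable fun k : ∀ i, κ i => ‖∏ i, f i (k i)‖) ∧
          HasSum (fun k : ∀ i, κ i => ∏ i, f i (k i)) (∏ i, a i) from (h κ f a hf hf_norm).2
  refine Fintype.induction_empty_option ?of_equiv ?empty ?option ι (h_fintype := hι)
  case of_equiv =>
    intro α β _ e ih κ f a hf hf_norm
    let _ := Fintype.ofEquiv β e.symm
    have reindex (k : ∀ i, κ (e i)) :
        ∏ j, f j (e.piCongrLeft κ k j) = ∏ i, f (e i) (k i) := by
      simp [← e.prod_comp]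
    rw [← (e.piCongrLeft κ).summable_iff, ← (e.piCongrLeft κ).hasSum_iff, ← e.prod_comp]
    simpa only [Function.comp_def, reindex] using
      ih _ _ _ (fun i => hf (e i)) fun i => hf_norm (e i)
  case empty =>
    intro κ f a _ _
    exact ⟨(hasSum_fintype _).summable, by simp [hasSum_unique]⟩
  case option =>
    intro α _ ih κ f a hf hf_norm
    obtain ⟨ih_norm, ih_sum⟩ := ih _ _ _ (fun i => hf (some i)) fun i => hf_norm (some i)
    rw [← Equiv.piOptionEquivProd.symm.summable_iff, ← Equiv.piOptionEquivProd.symm.hasSum_iff]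
    simp only [Function.comp_def, Fintype.prod_option, Equiv.piOptionEquivProd_symm_apply]
    have summable_norm_mul := (hf_norm none).mul_norm ih_norm
    have summable_mul := summable_mul_of_summable_norm (hf_norm none) ih_norm
    have hasSum_mul := (hf none).mul ih_sum summable_mul
    exact ⟨summable_norm_mul, hasSum_mul⟩

theorem hasSum_prod_pow_div_factorial {ι 𝔸 : Type*} [Fintype ι] [NormedField 𝔸]
    [NormedAlgebra ℚ 𝔸] [CompleteSpace 𝔸] (a : ι → 𝔸) :
    HasSum (fun n : ι → ℕ => ∏ i, a i ^ n i / (n i).factorial) (NormedSpace.exp (∑ i, a i)) := by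
  have exp_series (i : ι) : HasSum (fun k : ℕ => a i ^ k / k.factorial) (NormedSpace.exp (a i)) :=
    NormedSpace.expSeries_div_hasSum_exp (a i)
  have summable_norm (i : ι) : Summable fun k : ℕ => ‖a i ^ k / k.factorial‖ :=
    NormedSpace.norm_expSeries_div_summable (a i)
  have product_series := hasSum_prod_pi exp_series summable_norm
  rwa [← NormedSpace.exp_sum] at product_series

theorem sum_spin_pow (k : ℕ) : ∑ b, spin b ^ k = if Even k then 2 else 0 := by
  rcases Nat.even_or_odd k with hk | hk
  · simp [spin, hk, hk.neg_one_pow, one_add_one_eq_two]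
  · simp [spin, hk, hk.neg_one_pow]

theorem sum_prod_spin_pow {V : Type*} [Fintype V] [DecidableEq V] (k : V → ℕ) :
    ∑ σ : V → Bool, ∏ x, spin (σ x) ^ k x =
      if ∀ x, Even (k x) then 2 ^ Fintype.card V else 0 := by
  simp only [← Fintype.prod_sum fun x b => spin b ^ k x, sum_spin_pow, prod_ite_zero, mem_univ,
    true_imp_iff, prod_const, card_univ]

section Multibody

variable {V ι : Type*} [Fintype ι]

/-- The energy `Σ_i J_i σ_{S_i}` of a system of multi-body interactions: the bond `i` couples all
the sites of the finite set `S i`, with strength `J i`. -/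
noncomputable def multibodyEnergy (S : ι → Finset V) (J : ι → ℝ) (σ : V → Bool) : ℝ :=
  ∑ i, J i * ∏ x ∈ S i, spin (σ x)

/-- The weight `w_J(n) = Π_i J_i^{n_i}/n_i!` of a current `n` on the bonds. -/
noncomputable def multibodyWeight (J : ι → ℝ) (n : ι → ℕ) : ℝ :=
  ∏ i, J i ^ n i / (n i).factorial

theorem hasSum_exp_multibodyEnergy (S : ι → Finset V) (J : ι → ℝ) (σ : V → Bool) :
    HasSum (fun n : ι → ℕ => multibodyWeight J n * ∏ i, (∏ x ∈ S i, spin (σ x)) ^ n i)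
      (Real.exp (multibodyEnergy S J σ)) := by
  simpa only [Real.exp_eq_exp_ℝ, multibodyEnergy, multibodyWeight, ← prod_mul_distrib,
    div_mul_eq_mul_div, ← mul_pow] using
    hasSum_prod_pow_div_factorial fun i => J i * ∏ x ∈ S i, spin (σ x)

variable [DecidableEq V]

/-- The total current `Δ_x(n)` through the bonds containing the site `x`. -/
def incidentCurrent (S : ι → Finset V) (n : ι → ℕ) (x : V) : ℕ :=
  ∑ i, if x ∈ S i then n i else 0

/-- The source set `∂n` of a current on the bonds `S`: the sites with odd incident current. -/
def multibodySources [Fintype V] (S : ι → Finset V) (n : ι → ℕ) : Finset V :=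
  {x | ¬ Even (incidentCurrent S n x)}

variable [Fintype V]

theorem prod_prod_pow_eq_prod_pow_incidentCurrent {M : Type*} [CommMonoid M]
    (S : ι → Finset V) (n : ι → ℕ) (f : V → M) :
    ∏ i, (∏ x ∈ S i, f x) ^ n i = ∏ x, f x ^ incidentCurrent S n x := by
  calc ∏ i, (∏ x ∈ S i, f x) ^ n i
      = ∏ i, ∏ x, f x ^ (if x ∈ S i then n i else 0) := by
        simp only [← prod_pow, pow_ite, pow_zero, Fintype.prod_ite_mem]
    _ = ∏ x, f x ^ incidentCurrent S n x := by
        rw [prod_comm]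
        simp only [prod_pow_eq_pow_sum, incidentCurrent]

theorem multibodySources_eq_iff {S : ι → Finset V} {n : ι → ℕ} {A : Finset V} :
    multibodySources S n = A ↔
      ∀ x, Even ((if x ∈ A then 1 else 0) + incidentCurrent S n x) := by
  simp only [Finset.ext_iff, multibodySources, mem_filter_univ]
  refine forall_congr' fun x => ?_
  by_cases hx : x ∈ A <;> simp [hx, Nat.even_add]

theorem sum_spin_mul_prod_pow (S : ι → Finset V) (A : Finset V) (n : ι → ℕ) :
    ∑ σ : V → Bool, (∏ x ∈ A, spin (σ x)) * ∏ i, (∏ x ∈ S i, spin (σ x)) ^ n i =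
      if multibodySources S n = A then 2 ^ Fintype.card V else 0 := by
  have spin_monomial (σ : V → Bool) :
      (∏ x ∈ A, spin (σ x)) * ∏ i, (∏ x ∈ S i, spin (σ x)) ^ n i =
        ∏ x, spin (σ x) ^ ((if x ∈ A then 1 else 0) + incidentCurrent S n x) := by
    simp only [prod_prod_pow_eq_prod_pow_incidentCurrent, pow_add, prod_mul_distrib, pow_ite,
      pow_one, pow_zero, Fintype.prod_ite_mem]
  simp only [spin_monomial, sum_prod_spin_pow, multibodySources_eq_iff]

theorem sum_spin_mul_exp_multibodyEnergy (S : ι → Finset V) (J : ι → ℝ) (A : Finset V) :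
    ∑ σ : V → Bool, (∏ x ∈ A, spin (σ x)) * Real.exp (multibodyEnergy S J σ) =
      2 ^ Fintype.card V *
        ∑' n : ι → ℕ, if multibodySources S n = A then multibodyWeight J n else 0 := by
  have expansion := hasSum_sum (s := univ) fun (σ : V → Bool) _ =>
    (hasSum_exp_multibodyEnergy S J σ).mul_left (∏ x ∈ A, spin (σ x))
  rw [← expansion.tsum_eq, ← tsum_mul_left]
  refine tsum_congr fun n => ?_
  simp only [mul_left_comm _ (multibodyWeight J n), ← mul_sum, sum_spin_mul_prod_pow]
  rw [mul_ite_zero, mul_ite_zero, mul_comm]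

theorem correlation_random_current_general (S : ι → Finset V) (J : ι → ℝ) (A : Finset V) :
    (∑ σ : V → Bool, (∏ x ∈ A, spin (σ x)) * Real.exp (multibodyEnergy S J σ)) /
        (∑ σ : V → Bool, Real.exp (multibodyEnergy S J σ)) =
      (∑' n : ι → ℕ, if multibodySources S n = A then multibodyWeight J n else 0) /
        (∑' n : ι → ℕ, if multibodySources S n = ∅ then multibodyWeight J n else 0) := by
  have partition_function := sum_spin_mul_exp_multibodyEnergy S J ∅
  simp only [prod_empty, one_mul] at partition_function
  rw [sum_spin_mul_exp_multibodyEnergy, partition_function]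
  exact mul_div_mul_left _ _ (by positivity)

end Multibody

section Graph

variable {V : Type*} [Fintype V] [DecidableEq V] (G : SimpleGraph V) [DecidableRel G.Adj]

theorem mul_interaction_eq_multibodyEnergy (β : ℝ) (σ : V → Bool) :
    β * interaction G σ =
      multibodyEnergy (fun e : G.edgeFinset => (e : Sym2 V).toFinset) (fun _ => β) σ := by
  rw [interaction, multibodyEnergy, ← mul_sum, ← sum_coe_sort]
  congr! 2 with ⟨e, he⟩
  induction e with
  | _ x y =>
    have hxy : x ≠ y := (SimpleGraph.mem_edgeFinset.1 he).ne
    simp [Sym2.toFinset_mk_eq, prod_pair hxy]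

theorem sources_eq_multibodySources (n : G.edgeFinset → ℕ) :
    sources G n = multibodySources (fun e : G.edgeFinset => (e : Sym2 V).toFinset) n := by
  simp only [sources, multibodySources, incidentCurrent, Sym2.mem_toFinset]

theorem currentWeight_eq_multibodyWeight (β : ℝ) (n : G.edgeFinset → ℕ) :
    currentWeight G β n = multibodyWeight (fun _ => β) n := rfl

end Graph

/-- **Random current representation of spin correlations**: for the Ising model at
zero field on a finite graph `G = (V,E)` and any `A ⊆ V`,
`⟨σ_A⟩ = (Σ_{∂n=A} w_β(n)) / (Σ_{∂n=∅} w_β(n))`. -/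
theorem correlation_random_current {V : Type*} [Fintype V] [DecidableEq V]
    (G : SimpleGraph V) [DecidableRel G.Adj] (β : ℝ) (A : Finset V) :
    (∑ σ : V → Bool, (∏ x ∈ A, spin (σ x)) * Real.exp (β * interaction G σ)) /
        (∑ σ : V → Bool, Real.exp (β * interaction G σ)) =
      (∑' n : ↥G.edgeFinset → ℕ, if sources G n = A then currentWeight G β n else 0) /
        (∑' n : ↥G.edgeFinset → ℕ, if sources G n = ∅ then currentWeight G β n else 0) := by
  simpa only [mul_interaction_eq_multibodyEnergy, sources_eq_multibodySources,
    currentWeight_eq_multibodyWeight] using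
    correlation_random_current_general (fun e : G.edgeFinset => (e : Sym2 V).toFinset)
      (fun _ => β) A
end

section
/- As a consequence of the switching lemma, for the Ising model at zero field on a finite graph G and any A ⊆ V, the square of the spin correlation satisfies ⟨σ_A⟩² = P^∅⊗P^∅[n₁ + n₂ ∈ F_A], where P^∅ is the probability measure on currents with empty sources proportional to w(n), the two currents n₁, n₂ are independent, and F_A is the event that there exists k ≤ n₁+n₂ with ∂k = A. -/
open Finset

/-!
Expand the product of two currents along their sum `m`: up to the factor `w(m)`, the pair
`(a, m - a)` has weight `∏ₑ (mₑ choose aₑ)`, so the total weight of the splittings of `m` with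
`∂a = h` is the coefficient at `h` of `Q = ∏ₑ (1 + x^{∂e}) ^ mₑ` in the group algebra of the
`ℤ/2`-vector space of boundaries. There `x^{∂e} (1 + x^{∂e}) = 1 + x^{∂e}`, so `Q` is invariant
under multiplication by `x^{∂k}` for every `k ≤ m`: this is the switching of the sources `B = ∂k`
from one current to the other. Taking both source sets equal to `A` gives `⟨σ_A⟩²`.
-/

section Sums

theorem sum_antidiagonal_eq_sum_Iic {α M : Type*} [AddCommMonoid α] [PartialOrder α]
    [CanonicallyOrderedAdd α] [Sub α] [OrderedSub α] [AddLeftReflectLE α]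
    [LocallyFiniteOrderBot α] [HasAntidiagonal α] [AddCommMonoid M] (f : α × α → M) (m : α) :
    ∑ p ∈ antidiagonal m, f p = ∑ a ∈ Iic m, f (a, m - a) := by
  refine sum_nbij' Prod.fst (fun a ↦ (a, m - a)) ?_ ?_ ?_ ?_ ?_
  · exact fun p hp ↦ mem_Iic.2 (HasAntidiagonal.antidiagonal.fst_le hp)
  · exact fun a ha ↦ mem_antidiagonal.2 (add_tsub_cancel_of_le (mem_Iic.1 ha))
  · rintro ⟨a, b⟩ hp
    simp [← mem_antidiagonal.1 hp]
  · exact fun _ _ ↦ rfl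
  · rintro ⟨a, b⟩ hp
    simp [← mem_antidiagonal.1 hp]

theorem tsum_prod_eq_tsum_sum_antidiagonal {α M : Type*} [AddMonoid α] [HasAntidiagonal α]
    [AddCommGroup M] [UniformSpace M] [IsUniformAddGroup M] [CompleteSpace M] [T0Space M]
    {f : α × α → M} (hf : Summable f) :
    ∑' p, f p = ∑' m, ∑ p ∈ antidiagonal m, f p := by
  let e := HasAntidiagonal.sigmaAntidiagonalEquivProd (A := α)
  calc
    ∑' p, f p = ∑' q, f (e q) := (e.tsum_eq f).symm
    _ = ∑' m : α, ∑' p : antidiagonal m, f (p : α × α) := (e.summable_iff.2 hf).tsum_sigma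
    _ = ∑' m, ∑ p ∈ antidiagonal m, f p := tsum_congr fun m ↦ tsum_subtype _ f

theorem summable_ite_zero {α M : Type*} [AddCommGroup M] [UniformSpace M] [IsUniformAddGroup M]
    [CompleteSpace M] {f : α → M} (hf : Summable f) (P : α → Prop) [DecidablePred P] :
    Summable fun a ↦ if P a then f a else 0 := by
  refine (hf.indicator {a | P a}).congr fun a ↦ ?_
  simp only [Set.indicator_apply, Set.mem_ofPred_eq]

theorem summable_pi_prod_of_nonneg {ι : Type*} [Fintype ι] {κ : ι → Type*}
    {f : ∀ i, κ i → ℝ} (hf₀ : ∀ i j, 0 ≤ f i j) (hf : ∀ i, Summable (f i)) :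
    Summable fun n : ∀ i, κ i ↦ ∏ i, f i (n i) := by
  classical
  have hnonneg (n : ∀ i, κ i) : 0 ≤ ∏ i, f i (n i) := prod_nonneg fun i _ ↦ hf₀ i (n i)
  refine summable_of_sum_le hnonneg (c := ∏ i, ∑' j, f i j) fun u ↦ ?_
  have hu : u ⊆ Fintype.piFinset fun i ↦ u.image (· i) := fun n hn ↦
    Fintype.mem_piFinset.2 fun i ↦ mem_image_of_mem (· i) hn
  calc
    ∑ n ∈ u, ∏ i, f i (n i)
      ≤ ∑ n ∈ Fintype.piFinset fun i ↦ u.image (· i), ∏ i, f i (n i) :=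
        sum_le_sum_of_subset_of_nonneg hu fun n _ _ ↦ hnonneg n
    _ = ∏ i, ∑ j ∈ u.image (· i), f i j := (prod_univ_sum _ _).symm
    _ ≤ ∏ i, ∑' j, f i j := prod_le_prod (fun i _ ↦ sum_nonneg fun j _ ↦ hf₀ i j)
        fun i _ ↦ (hf i).sum_le_tsum _ fun j _ ↦ hf₀ i j

end Sums

theorem pow_mul_one_add_pow_of_mul_self_eq_one {S : Type*} [Semiring S] {s : S}
    (hs : s * s = 1) {k m : ℕ} (hkm : k ≤ m) : s ^ k * (1 + s) ^ m = (1 + s) ^ m := by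
  have hcomm : Commute s (1 + s) := (Commute.one_right s).add_right (Commute.refl s)
  have habsorb : s * (1 + s) = 1 + s := by rw [mul_add, mul_one, hs, add_comm]
  obtain ⟨l, rfl⟩ := Nat.exists_eq_add_of_le hkm
  rw [pow_add, ← mul_assoc, ← hcomm.mul_pow, habsorb]

theorem pow_div_factorial_mul_pow_div_factorial {𝕜 : Type*} [Field 𝕜] [CharZero 𝕜]
    (x : 𝕜) (a b : ℕ) :
    x ^ a / (a.factorial : 𝕜) * (x ^ b / (b.factorial : 𝕜)) =
      x ^ (a + b) / ((a + b).factorial : 𝕜) * ((a + b).choose a : 𝕜) := by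
  have hab : ((a + b).factorial : 𝕜) ≠ 0 := Nat.cast_ne_zero.2 (a + b).factorial_ne_zero
  rw [Nat.cast_add_choose 𝕜, pow_add]
  field_simp

section Weight

variable {ι 𝕜 : Type*} [Fintype ι]

/-- The weight `∏ₑ Jₑ ^ nₑ / nₑ!` of a current `n` for edge-dependent couplings `J`; it is
`currentWeight` when `J` is constant. -/
noncomputable def couplingWeight [Field 𝕜] (J : ι → 𝕜) (n : ι → ℕ) : 𝕜 :=
  ∏ e, J e ^ n e / (n e).factorial

theorem couplingWeight_mul [Field 𝕜] [CharZero 𝕜] (J : ι → 𝕜) (a b : ι → ℕ) :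
    couplingWeight J a * couplingWeight J b =
      couplingWeight J (a + b) * ∏ e, (((a + b) e).choose (a e) : 𝕜) := by
  simp only [couplingWeight, ← prod_mul_distrib, Pi.add_apply]
  exact prod_congr rfl fun e _ ↦ pow_div_factorial_mul_pow_div_factorial (J e) (a e) (b e)

theorem summable_norm_couplingWeight [NormedField 𝕜] [NormedAlgebra ℚ 𝕜] (J : ι → 𝕜) :
    Summable fun n ↦ ‖couplingWeight J n‖ := by
  simp only [couplingWeight, norm_prod]
  exact summable_pi_prod_of_nonneg (κ := fun _ ↦ ℕ)
    (f := fun e j ↦ ‖J e ^ j / (j.factorial : 𝕜)‖) (fun _ _ ↦ norm_nonneg _)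
    fun e ↦ NormedSpace.norm_expSeries_div_summable (J e)

end Weight

section Boundary

open AddMonoidAlgebra (single)

variable {ι H : Type*} [Fintype ι] [AddCommMonoid H]

/-- The boundary `∑ₑ nₑ • dₑ` of a current `n`, where `d e` is the boundary of the edge `e`. Sources
modulo 2 are encoded by taking `H` to be a module over `ZMod 2`. -/
def boundary (d : ι → H) : (ι → ℕ) →ₗ[ℕ] H :=
  Fintype.linearCombination ℕ d

/-- The element `∏ₑ (1 + x^{dₑ}) ^ mₑ` of the group algebra of `H`: the generating function, by
boundary, of the subgraphs of the multigraph having `m e` copies of each edge `e`. -/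
noncomputable def subcurrentPoly (R : Type*) [CommSemiring R] (d : ι → H) (m : ι → ℕ) :
    AddMonoidAlgebra R H :=
  ∏ e, (1 + single (d e) 1) ^ m e

variable {R : Type*} [CommSemiring R]

theorem coeff_subcurrentPoly [DecidableEq ι] [DecidableEq H] (d : ι → H) (m : ι → ℕ) (h : H) :
    (subcurrentPoly R d m).coeff h =
      ∑ a ∈ Iic m, if boundary d a = h then ∏ e, ((m e).choose (a e) : R) else 0 := by
  have hmonomial (e : ι) (j : ℕ) :
      single (d e) (1 : R) ^ j * 1 ^ (m e - j) * ((m e).choose j : _) =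
        single (j • d e) ((m e).choose j : R) := by
    rw [AddMonoidAlgebra.single_pow, AddMonoidAlgebra.natCast_def, one_pow, one_pow, mul_one,
      AddMonoidAlgebra.single_mul_single, add_zero, one_mul]
  have hexpand : subcurrentPoly R d m =
      ∑ a ∈ Iic m, single (boundary d a) (∏ e, ((m e).choose (a e) : R)) := by
    simp only [subcurrentPoly, add_comm (1 : AddMonoidAlgebra R H), add_pow, hmonomial,
      Nat.range_succ_eq_Iic]
    rw [prod_univ_sum]
    exact sum_congr rfl fun a _ ↦ AddMonoidAlgebra.prod_single ..
  rw [hexpand]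
  simp [AddMonoidAlgebra.coeff_single, Finsupp.single_apply]

end Boundary

section Switching

open AddMonoidAlgebra (single)

variable {ι H 𝕜 R : Type*} [Fintype ι] [AddCommGroup H] [CommSemiring R]

theorem single_boundary_mul_subcurrentPoly [Module (ZMod 2) H] (d : ι → H) {k m : ι → ℕ}
    (hkm : k ≤ m) :
    single (boundary d k) 1 * subcurrentPoly R d m = subcurrentPoly R d m := by
  have hsq (e : ι) : single (d e) (1 : R) * single (d e) 1 = 1 := by
    rw [AddMonoidAlgebra.single_mul_single, ZModModule.add_self, mul_one,
      AddMonoidAlgebra.one_def]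
  have hprod : single (boundary d k) (1 : R) = ∏ e, single (d e) 1 ^ k e := by
    simp [boundary, Fintype.linearCombination_apply, AddMonoidAlgebra.single_pow,
      AddMonoidAlgebra.prod_single]
  rw [hprod, subcurrentPoly, ← prod_mul_distrib]
  exact prod_congr rfl fun e _ ↦ pow_mul_one_add_pow_of_mul_self_eq_one (hsq e) (hkm e)

theorem coeff_subcurrentPoly_add_boundary [Module (ZMod 2) H] (d : ι → H) {k m : ι → ℕ}
    (hkm : k ≤ m) (h : H) :
    (subcurrentPoly R d m).coeff (h + boundary d k) = (subcurrentPoly R d m).coeff h := by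
  conv_lhs => rw [← single_boundary_mul_subcurrentPoly d hkm]
  simp [AddMonoidAlgebra.coeff_single_mul_apply]

variable [DecidableEq H]

theorem sum_antidiagonal_couplingWeight [Field 𝕜] [CharZero 𝕜] [HasAntidiagonal (ι → ℕ)]
    (J : ι → 𝕜) (d : ι → H) (A B : H) (m : ι → ℕ) :
    (∑ p ∈ antidiagonal m, if boundary d p.1 = A ∧ boundary d p.2 = B then
        couplingWeight J p.1 * couplingWeight J p.2 else 0) =
      if A + B = boundary d m then couplingWeight J m * (subcurrentPoly 𝕜 d m).coeff A else 0 := by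
  classical
  have hsources {p : (ι → ℕ) × (ι → ℕ)} (hp : p ∈ antidiagonal m) :
      boundary d p.1 = A ∧ boundary d p.2 = B ↔ A + B = boundary d m ∧ boundary d p.1 = A := by
    rw [← mem_antidiagonal.1 hp, map_add]
    constructor
    · rintro ⟨rfl, rfl⟩
      exact ⟨rfl, rfl⟩
    · rintro ⟨hAB, rfl⟩
      exact ⟨rfl, (add_left_cancel hAB).symm⟩
  have hweight {p : (ι → ℕ) × (ι → ℕ)} (hp : p ∈ antidiagonal m) :
      couplingWeight J p.1 * couplingWeight J p.2 =
        couplingWeight J m * ∏ e, ((m e).choose (p.1 e) : 𝕜) := by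
    rw [couplingWeight_mul, mem_antidiagonal.1 hp]
  rw [coeff_subcurrentPoly, ← sum_antidiagonal_eq_sum_Iic fun p ↦
    if boundary d p.1 = A then ∏ e, ((m e).choose (p.1 e) : 𝕜) else 0, mul_sum]
  split_ifs with hAB
  · refine sum_congr rfl fun p hp ↦ ?_
    simp only [hsources hp, hweight hp, hAB, true_and, mul_ite, mul_zero]
  · exact sum_eq_zero fun p hp ↦ if_neg fun h ↦ hAB ((hsources hp).1 h).1

variable [Module (ZMod 2) H]

open scoped Classical in
theorem sum_antidiagonal_switch [Field 𝕜] [CharZero 𝕜] [HasAntidiagonal (ι → ℕ)]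
    (J : ι → 𝕜) (d : ι → H) (A B : H) (m : ι → ℕ) :
    (∑ p ∈ antidiagonal m, if boundary d p.1 = A ∧ boundary d p.2 = B then
        couplingWeight J p.1 * couplingWeight J p.2 else 0) =
      ∑ p ∈ antidiagonal m, if boundary d p.1 = A + B ∧ boundary d p.2 = 0 ∧
          ∃ k ≤ m, boundary d k = B then couplingWeight J p.1 * couplingWeight J p.2 else 0 := by
  by_cases hB : ∃ k ≤ m, boundary d k = B
  · simp only [hB, and_true, sum_antidiagonal_couplingWeight, add_zero]
    obtain ⟨k, hkm, rfl⟩ := hB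
    rw [coeff_subcurrentPoly_add_boundary d hkm]
  · simp only [hB, and_false, if_false, sum_const_zero]
    exact sum_eq_zero fun p hp ↦ if_neg fun h ↦
      hB ⟨p.2, HasAntidiagonal.antidiagonal.snd_le hp, h.2⟩

open scoped Classical in
theorem switching_lemma [NormedField 𝕜] [CharZero 𝕜] [CompleteSpace 𝕜] (J : ι → 𝕜) (d : ι → H)
    (A B : H) {F : (ι → ℕ) → 𝕜}
    (hF : Summable fun p : (ι → ℕ) × (ι → ℕ) ↦
      couplingWeight J p.1 * couplingWeight J p.2 * F (p.1 + p.2)) :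
    (∑' p : (ι → ℕ) × (ι → ℕ), if boundary d p.1 = A ∧ boundary d p.2 = B then
        couplingWeight J p.1 * couplingWeight J p.2 * F (p.1 + p.2) else 0) =
      ∑' p : (ι → ℕ) × (ι → ℕ), if boundary d p.1 = A + B ∧ boundary d p.2 = 0 ∧
          ∃ k ≤ p.1 + p.2, boundary d k = B then
        couplingWeight J p.1 * couplingWeight J p.2 * F (p.1 + p.2) else 0 := by
  classical
  let : HasAntidiagonal (ι → ℕ) := HasAntidiagonal.antidiagonalOfLocallyFinite
  have hregroup (P : (ι → ℕ) × (ι → ℕ) → (ι → ℕ) → Prop) [∀ p m, Decidable (P p m)] :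
      (∑' p : (ι → ℕ) × (ι → ℕ), if P p (p.1 + p.2) then
        couplingWeight J p.1 * couplingWeight J p.2 * F (p.1 + p.2) else 0) =
      ∑' m, (∑ p ∈ antidiagonal m, if P p m then
        couplingWeight J p.1 * couplingWeight J p.2 else 0) * F m := by
    rw [tsum_prod_eq_tsum_sum_antidiagonal]
    · refine tsum_congr fun m ↦ ?_
      rw [sum_mul]
      refine sum_congr rfl fun p hp ↦ ?_
      rw [mem_antidiagonal.1 hp, ite_mul, zero_mul]
    · exact summable_ite_zero hF fun p ↦ P p (p.1 + p.2)
  rw [hregroup fun p _ ↦ boundary d p.1 = A ∧ boundary d p.2 = B,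
    hregroup fun p m ↦ boundary d p.1 = A + B ∧ boundary d p.2 = 0 ∧ ∃ k ≤ m, boundary d k = B]
  exact tsum_congr fun m ↦ congrArg (· * F m) (sum_antidiagonal_switch J d A B m)

open scoped Classical in
theorem sq_tsum_couplingWeight [NormedField 𝕜] [NormedAlgebra ℚ 𝕜] [CompleteSpace 𝕜]
    (J : ι → 𝕜) (d : ι → H) (A : H) :
    (∑' n : ι → ℕ, if boundary d n = A then couplingWeight J n else 0) ^ 2 =
      ∑' p : (ι → ℕ) × (ι → ℕ), if boundary d p.1 = 0 ∧ boundary d p.2 = 0 ∧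
          ∃ k ≤ p.1 + p.2, boundary d k = A then
        couplingWeight J p.1 * couplingWeight J p.2 else 0 := by
  have : CharZero 𝕜 := algebraRat.charZero 𝕜
  have hnorm : Summable fun n : ι → ℕ ↦ ‖if boundary d n = A then couplingWeight J n else 0‖ := by
    simp only [apply_ite norm, norm_zero]
    exact summable_ite_zero (summable_norm_couplingWeight J) _
  have hpairs : Summable fun p : (ι → ℕ) × (ι → ℕ) ↦
      couplingWeight J p.1 * couplingWeight J p.2 * 1 := by
    simpa only [mul_one] using summable_mul_of_summable_norm
      (summable_norm_couplingWeight J) (summable_norm_couplingWeight J)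
  have hswitch := switching_lemma J d A A (F := fun _ ↦ 1) hpairs
  simp only [mul_one, ZModModule.add_self] at hswitch
  rw [sq, tsum_mul_tsum_of_summable_norm hnorm hnorm, ← hswitch]
  exact tsum_congr fun p ↦ ite_zero_mul_ite_zero _ _ _ _

end Switching

section Graph

variable {V : Type*}

/-- The characteristic vector of `s` modulo 2, turning symmetric differences into sums. -/
noncomputable def parityVector (s : Set V) : V → ZMod 2 :=
  s.indicator 1

theorem sources_eq_iff [Fintype V] [DecidableEq V] (G : SimpleGraph V) [DecidableRel G.Adj]
    (n : G.edgeFinset → ℕ) (A : Finset V) :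
    sources G n = A ↔
      boundary (fun e : G.edgeFinset ↦ parityVector ((e : Sym2 V) : Set V)) n = parityVector A := by
  have hdegree (x : V) :
      boundary (fun e : G.edgeFinset ↦ parityVector ((e : Sym2 V) : Set V)) n x =
        ((∑ e : G.edgeFinset, if x ∈ (e : Sym2 V) then n e else 0 : ℕ) : ZMod 2) := by
    simp [boundary, Fintype.linearCombination_apply, parityVector, Set.indicator]
  rw [Finset.ext_iff, funext_iff]
  refine forall_congr' fun x ↦ ?_
  rw [hdegree, parityVector, sources, mem_filter_univ]
  by_cases hx : x ∈ A
  · rw [Set.indicator_of_mem (mem_coe.2 hx), Pi.one_apply, ZMod.natCast_eq_one_iff_odd,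
      Nat.not_even_iff_odd, iff_true_right hx]
  · rw [Set.indicator_of_notMem (mem_coe.not.2 hx), ZMod.natCast_eq_zero_iff_even,
      iff_false_right hx, not_not]

open scoped Classical in
/-- Up to the factor `2 ^ |V|` the denominator is `∑_σ exp (∑ₑ Jₑ σ_x σ_y) > 0`, so the quotients
are genuine for couplings of any sign. -/
theorem squared_correlation_two_currents_general [Fintype V] [DecidableEq V] (G : SimpleGraph V)
    [DecidableRel G.Adj] (J : G.edgeFinset → ℝ) (A : Finset V) :
    ((∑' n : G.edgeFinset → ℕ, if sources G n = A then couplingWeight J n else 0) /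
        (∑' n : G.edgeFinset → ℕ, if sources G n = ∅ then couplingWeight J n else 0)) ^ 2 =
      (∑' p : (G.edgeFinset → ℕ) × (G.edgeFinset → ℕ),
          if sources G p.1 = ∅ ∧ sources G p.2 = ∅ ∧
              (∃ k : G.edgeFinset → ℕ, k ≤ p.1 + p.2 ∧ sources G k = A) then
            couplingWeight J p.1 * couplingWeight J p.2 else 0) /
        (∑' n : G.edgeFinset → ℕ, if sources G n = ∅ then couplingWeight J n else 0) ^ 2 := by
  have hempty : parityVector ((∅ : Finset V) : Set V) = 0 := by
    rw [parityVector, coe_empty, Set.indicator_empty']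
  rw [div_pow]
  congr 1
  simp only [sources_eq_iff, hempty]
  exact sq_tsum_couplingWeight J _ _

end Graph

open scoped Classical in
/-- **Squared correlations via two independent sourceless currents**: for the Ising
model at zero field on a finite graph `G` and `A ⊆ V`,
`⟨σ_A⟩² = P^∅⊗P^∅[n₁ + n₂ ∈ F_A]`, where `P^∅` is the probability measure on
currents with empty source set proportional to `w`, and `F_A` is the event that some
`k ≤ n₁ + n₂` has `∂k = A`. -/
theorem squared_correlation_two_currents {V : Type*} [Fintype V] [DecidableEq V]
    (G : SimpleGraph V) [DecidableRel G.Adj] (β : ℝ) (hβ : 0 < β) (A : Finset V) :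
    ((∑' n : ↥G.edgeFinset → ℕ, if sources G n = A then currentWeight G β n else 0) /
        (∑' n : ↥G.edgeFinset → ℕ, if sources G n = ∅ then currentWeight G β n else 0)) ^ 2 =
      (∑' p : (↥G.edgeFinset → ℕ) × (↥G.edgeFinset → ℕ),
          if sources G p.1 = ∅ ∧ sources G p.2 = ∅ ∧
              (∃ k : ↥G.edgeFinset → ℕ, k ≤ p.1 + p.2 ∧ sources G k = A) then
            currentWeight G β p.1 * currentWeight G β p.2 else 0) /
        (∑' n : ↥G.edgeFinset → ℕ, if sources G n = ∅ then currentWeight G β n else 0) ^ 2 :=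
  squared_correlation_two_currents_general G (fun _ ↦ β) A
end
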